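/- arXiv:2407.20226 — 2 statements merged into one kernel-verified Lean document; each statement's English description precedes it below -/
import Mathlib

section
/- Let G be a finite connected simple graph with n vertices, let T be a spanning tree of G, and let π = (e_1, …, e_{n−1}) be an ordering (bijection) of the edges of T. For 0 ≤ j ≤ n−2 let F_j be the spanning forest of G with edge set {e_1, …, e_j}, and let ∂F_j be the set of edges of G joining two distinct connected components of F_j. Let P_MST(T, π) be the μ_G-probability that T is the unique minimum-weight spanning tree and simultaneously w(e_1) < w(e_2) < ⋯ < w(e_{n−1}). Then P_MST(T, π) = ∏_{j=0}^{n−2} 1/|∂F_j|; consequently P_MST(T;G) = ∑_π ∏_{j=0}^{n−2} 1/|∂F_j(π)|, where the sum is over all orderings π of E(T). -/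
open MeasureTheory SimpleGraph
open scoped Classical

noncomputable section

namespace RST

variable {V : Type*}

/-- The i.i.d. uniform-on-`[0,1]` product measure on weight vectors indexed by `E`. -/
def edgeUniform (E : Type*) [Fintype E] : Measure (E → ℝ) :=
  Measure.pi fun _ => (volume : Measure ℝ).restrict (Set.Icc (0 : ℝ) 1)

/-- The graph on `V` whose edge set is the finset `T`. -/
def spanGraph (T : Finset (Sym2 V)) : SimpleGraph V :=
  SimpleGraph.fromEdgeSet ↑T

/-- `T` is (the edge set of) a spanning tree of `G`. -/
def IsSpanningTree (G : SimpleGraph V) (T : Finset (Sym2 V)) : Prop :=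
  ↑T ⊆ G.edgeSet ∧ (spanGraph T).Connected ∧ (spanGraph T).IsAcyclic

/-- Total weight `∑_{e ∈ T} w e` of the tree `T`. -/
def treeWeight (G : SimpleGraph V) [Fintype V] (w : G.edgeSet → ℝ) (T : Finset (Sym2 V)) : ℝ :=
  ∑ e : G.edgeSet, if (e : Sym2 V) ∈ T then w e else 0

/-- The event that `T` is the unique minimum-weight spanning tree of `G`. -/
def mstEvent (G : SimpleGraph V) [Fintype V] (T : Finset (Sym2 V)) : Set (G.edgeSet → ℝ) :=
  {w | IsSpanningTree G T ∧ ∀ T' : Finset (Sym2 V), IsSpanningTree G T' → T' ≠ T →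
    treeWeight G w T < treeWeight G w T'}

/-- `P_MST(T; G)`: probability that `T` is the unique minimum-weight spanning tree. -/
def mstProb (G : SimpleGraph V) [Fintype V] (T : Finset (Sym2 V)) : ℝ :=
  (edgeUniform G.edgeSet (mstEvent G T)).toReal

/-- `∂F`: the set of edges of `G` joining two distinct connected components of the
spanning forest with edge set `F`. -/
def boundary (G : SimpleGraph V) (F : Finset (Sym2 V)) : Set (Sym2 V) :=
  {e | e ∈ G.edgeSet ∧ e ∉ F ∧ ∀ u v : V, e = s(u, v) → ¬(spanGraph F).Reachable u v}

/-- The event that the weights of the edges `π 0, π 1, …` occur in increasing order. -/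
def orderEvent (G : SimpleGraph V) [Fintype V] {k : ℕ} (π : Fin k → Sym2 V) :
    Set (G.edgeSet → ℝ) :=
  {w | ∀ (i j : Fin k) (e e' : G.edgeSet), i < j → (e : Sym2 V) = π i →
    (e' : Sym2 V) = π j → w e < w e'}

/-- `F_j(π)`: the forest consisting of the first `j` tree edges in the order `π`. -/
def initialForest {V : Type*} (T : Finset (Sym2 V)) (π : Fin T.card ≃ ↥T) (j : ℕ) :
    Finset (Sym2 V) :=
  (Finset.univ.filter fun i : Fin T.card => (i : ℕ) < j).image fun i => (π i).1

/-!
Write `e_1, …, e_{n-1}` for the tree edges in the order `π`. The tree `T` is the unique minimum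
spanning tree with weights increasing along `π` exactly when, for each `j`, the edge `e_{j+1}` is
the strict minimum of the weights over `∂F_j`: these are the choices of Kruskal's algorithm. Both
directions are exchange arguments. In any spanning tree, the path joining the ends of a missing edge
of `∂F_j` leaves the component of `F_j` it starts from, hence contains an edge of `∂F_j` for which
the missing edge can be swapped; this is applied to `T` in one direction and to a competitor of `T`
in the other.

The sets `∂F_0 ⊇ ∂F_1 ⊇ …` decrease, and `e_{i+1} ∈ ∂F_j` if and only if `j ≤ i`. Therefore the
events attached to `∂F_0, …, ∂F_{j-1}` are invariant under permutations of the weights on `∂F_j`,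
and for an exchangeable law without ties each edge of `∂F_j` is, given these events, equally likely
to carry the minimum over `∂F_j`. This contributes the factor `1 / |∂F_j|`.
-/

section Exchangeable

variable {ι α : Type*}

/-- Exchangeability of a random family `w : ι → α` with law `μ`: permuting the indices does not
change the law. -/
def IsExchangeable [MeasurableSpace α] (μ : Measure (ι → α)) : Prop :=
  ∀ σ : Equiv.Perm ι, MeasurePreserving (fun w : ι → α => w ∘ σ) μ μ

/-- The event that `w e` is the strict minimum of `w` over `B`. The index `e` is not required to
lie in `B`. -/
def strictMinEvent [LT α] (B : Finset ι) (e : ι) : Set (ι → α) :=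
  {w | ∀ f ∈ B, f ≠ e → w e < w f}

lemma mem_strictMinEvent [LT α] {B : Finset ι} {e : ι} {w : ι → α} :
    w ∈ strictMinEvent B e ↔ ∀ f ∈ B, f ≠ e → w e < w f :=
  Iff.rfl

lemma preimage_comp_strictMinEvent [LT α] {σ : Equiv.Perm ι} {B : Finset ι}
    (hσ : ∀ f ∉ B, σ f = f) (e : ι) :
    (fun w : ι → α => w ∘ σ) ⁻¹' strictMinEvent B e = strictMinEvent B (σ e) := by
  have hB (f : ι) : f ∈ B ↔ σ f ∈ B := by
    by_cases hf : f ∈ B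
    · have : σ f ∈ B := by_contra fun h => h (by rwa [σ.injective (hσ _ h)])
      simp only [hf, this]
    · rw [hσ f hf]
  ext w
  refine σ.forall_congr fun f => ?_
  rw [hB f, σ.injective.ne_iff]
  rfl

lemma pairwiseDisjoint_strictMinEvent [Preorder α] (B : Finset ι) :
    (B : Set ι).PairwiseDisjoint (strictMinEvent (α := α) B) := fun e he f hf hef =>
  Set.disjoint_left.2 fun _ hwe hwf => lt_asymm (hwe f hf hef.symm) (hwf e he hef)

variable [LinearOrder α]

lemma exists_mem_strictMinEvent {B : Finset ι} (hB : B.Nonempty) {w : ι → α}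
    (hw : Function.Injective w) : ∃ e ∈ B, w ∈ strictMinEvent B e := by
  obtain ⟨e, he, hmin⟩ := B.exists_min_image w hB
  exact ⟨e, he, fun f hf hfe => (hmin f hf).lt_of_ne (hw.ne hfe.symm)⟩

variable [TopologicalSpace α] [OrderClosedTopology α] [SecondCountableTopology α]
  [MeasurableSpace α] [OpensMeasurableSpace α] {μ : Measure (ι → α)}

lemma measurableSet_strictMinEvent (B : Finset ι) (e : ι) :
    MeasurableSet (strictMinEvent (α := α) B e) := by
  have h : strictMinEvent (α := α) B e = ⋂ f ∈ B, ⋂ (_ : f ≠ e), {w | w e < w f} := by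
    ext w
    simp only [mem_strictMinEvent, Set.mem_iInter, Set.mem_ofPred_eq]
  rw [h]
  exact B.measurableSet_biInter fun f _ => .iInter fun _ =>
    measurableSet_lt (measurable_pi_apply e) (measurable_pi_apply f)

/- The events `A ∩ strictMinEvent B f`, `f ∈ B`, almost surely partition `A`, and transpositions
inside `B` carry each of them to any other. -/
lemma card_mul_measure_inter_strictMinEvent (hμ : IsExchangeable μ)
    (hinj : ∀ᵐ w ∂μ, Function.Injective w) {A : Set (ι → α)} (hA : MeasurableSet A)
    {B : Finset ι} {e : ι} (he : e ∈ B)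
    (hAB : ∀ σ : Equiv.Perm ι, (∀ f ∉ B, σ f = f) → (fun w : ι → α => w ∘ σ) ⁻¹' A = A) :
    B.card * μ (A ∩ strictMinEvent B e) = μ A := by
  have hmeas (f : ι) : MeasurableSet (A ∩ strictMinEvent B f) :=
    hA.inter (measurableSet_strictMinEvent B f)
  have hswap (f : ι) (hf : f ∈ B) :
      μ (A ∩ strictMinEvent B f) = μ (A ∩ strictMinEvent B e) := by
    have hfix (g : ι) (hg : g ∉ B) : Equiv.swap e f g = g :=
      Equiv.swap_apply_of_ne_of_ne (fun h => hg (h ▸ he)) (fun h => hg (h ▸ hf))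
    rw [← (hμ (Equiv.swap e f)).measure_preimage (hmeas e).nullMeasurableSet, Set.preimage_inter,
      hAB _ hfix, preimage_comp_strictMinEvent hfix, Equiv.swap_apply_left]
  have hpart : A =ᵐ[μ] ⋃ f ∈ B, A ∩ strictMinEvent B f := by
    filter_upwards [hinj] with w hw
    obtain ⟨f, hf, hwf⟩ := exists_mem_strictMinEvent ⟨e, he⟩ hw
    refine propext ⟨fun hwA => Set.mem_biUnion hf ⟨hwA, hwf⟩, fun h => ?_⟩
    obtain ⟨_, _, hwA, _⟩ := Set.mem_iUnion₂.1 h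
    exact hwA
  calc B.card * μ (A ∩ strictMinEvent B e)
      = ∑ f ∈ B, μ (A ∩ strictMinEvent B f) := by
        rw [Finset.sum_congr rfl hswap, Finset.sum_const, nsmul_eq_mul]
    _ = μ (⋃ f ∈ B, A ∩ strictMinEvent B f) :=
        (measure_biUnion_finset ((pairwiseDisjoint_strictMinEvent B).mono
          fun _ => Set.inter_subset_right) fun f _ => hmeas f).symm
    _ = μ A := (measure_congr hpart).symm

/- The smallest set `B (Fin.last m)` is split off first: the other events only compare entries over
`B i ⊇ B (Fin.last m)` with that at `e i ∉ B (Fin.last m)`, so they are invariant under permutations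
of `B (Fin.last m)`. -/
theorem measure_iInter_strictMinEvent (hμ : IsExchangeable μ)
    (hinj : ∀ᵐ w ∂μ, Function.Injective w) {m : ℕ} {B : Fin m → Finset ι} {e : Fin m → ι}
    (hB : Antitone B) (he : ∀ i j, e i ∈ B j ↔ j ≤ i) :
    μ (⋂ i, strictMinEvent (B i) (e i)) = μ Set.univ * ∏ i, ((B i).card : ENNReal)⁻¹ := by
  induction m with
  | zero => simp
  | succ m ih =>
    set A : Set (ι → α) := ⋂ i : Fin m, strictMinEvent (B i.castSucc) (e i.castSucc)
    have hA : MeasurableSet A := .iInter fun i => measurableSet_strictMinEvent _ _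
    have hinter : ⋂ i, strictMinEvent (α := α) (B i) (e i)
        = A ∩ strictMinEvent (B (Fin.last m)) (e (Fin.last m)) := by
      ext w
      simp only [A, Set.mem_inter_iff, Set.mem_iInter, Fin.forall_fin_succ']
    have hinv (σ : Equiv.Perm ι) (hσ : ∀ f ∉ B (Fin.last m), σ f = f) :
        (fun w : ι → α => w ∘ σ) ⁻¹' A = A := by
      simp only [A, Set.preimage_iInter]
      refine Set.iInter_congr fun i => ?_
      have hei : e i.castSucc ∉ B (Fin.last m) := by
        simpa only [he, not_le] using Fin.castSucc_lt_last i
      rw [preimage_comp_strictMinEvent fun f hf => hσ f (Finset.notMem_mono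
        (hB (Fin.le_last _)) hf), hσ _ hei]
    have hlast : e (Fin.last m) ∈ B (Fin.last m) := (he _ _).2 le_rfl
    have hstep := card_mul_measure_inter_strictMinEvent hμ hinj hA hlast hinv
    rw [← ENNReal.eq_div_iff (by simpa using Finset.ne_empty_of_mem hlast)
      (ENNReal.natCast_ne_top _), div_eq_mul_inv] at hstep
    rw [hinter, hstep, ih (fun i j hij => hB hij) (fun i j => he _ _), mul_assoc,
      Fin.prod_univ_castSucc]

end Exchangeable

section Product

variable {ι α : Type*} [Fintype ι] [MeasurableSpace α] (ν : Measure α)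

lemma isExchangeable_pi [SigmaFinite ν] : IsExchangeable (Measure.pi fun _ : ι => ν) := fun σ =>
  measurePreserving_arrowCongr' _ _ σ.symm (.refl α) fun _ => .id ν

lemma map_eval_prodMk_eval_pi [IsProbabilityMeasure ν] {i j : ι} (hij : i ≠ j) :
    (Measure.pi fun _ : ι => ν).map (fun w => (w i, w j)) = ν.prod ν := by
  have hind := (ProbabilityTheory.iIndepFun_pi (μ := fun _ : ι => ν) (X := fun _ => id)
    fun _ => aemeasurable_id).indepFun hij
  have hmap := (ProbabilityTheory.indepFun_iff_map_prod_eq_prod_map_map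
    (measurable_pi_apply i).aemeasurable (measurable_pi_apply j).aemeasurable).1 hind
  exact hmap.trans (congrArg₂ _ (measurePreserving_eval _ i).map_eq
    (measurePreserving_eval _ j).map_eq)

lemma ae_prod_fst_ne_snd [MeasurableEq α] [SFinite ν] [NullSingletonClass ν] :
    ∀ᵐ p ∂ν.prod ν, p.1 ≠ p.2 := by
  refine (Measure.ae_prod_mem_iff_ae_ae_mem measurableSet_diagonal.compl).2 ?_
  filter_upwards with x
  filter_upwards [Measure.ae_ne ν x] with y hy using hy.symm

lemma ae_injective_pi [MeasurableEq α] [IsProbabilityMeasure ν] [NullSingletonClass ν] :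
    ∀ᵐ w ∂Measure.pi fun _ : ι => ν, Function.Injective w := by
  have ae_imp (i j : ι) : ∀ᵐ w ∂Measure.pi fun _ : ι => ν, w i = w j → i = j := by
    by_cases hij : i = j
    · simp only [hij, imp_true_iff, Filter.eventually_true]
    · have hne := ae_prod_fst_ne_snd ν
      rw [← map_eval_prodMk_eval_pi ν hij] at hne
      filter_upwards [ae_of_ae_map (by fun_prop) hne] with w hw h using absurd h hw
  simpa only [Function.Injective, ae_all_iff] using ae_imp

instance isProbabilityMeasure_restrict_Icc_zero_one :
    IsProbabilityMeasure ((volume : Measure ℝ).restrict (Set.Icc 0 1)) :=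
  ⟨by simp⟩

instance isProbabilityMeasure_edgeUniform : IsProbabilityMeasure (edgeUniform ι) :=
  Measure.pi.instIsProbabilityMeasure _

end Product

lemma existsUnique_equiv_strictMono {ι α : Type*} [Fintype ι] [LinearOrder α] {n : ℕ}
    (hn : Fintype.card ι = n) {f : ι → α} (hf : Function.Injective f) :
    ∃! π : Fin n ≃ ι, StrictMono fun i => f (π i) := by
  let : LinearOrder ι := LinearOrder.lift' f hf
  let ρ : Fin n ≃o ι := Fintype.orderIsoFinOfCardEq ι hn
  refine ⟨ρ, ρ.strictMono, fun π hπ => Equiv.ext fun i => ?_⟩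
  exact congrArg (· i) (Subsingleton.elim (hπ.orderIsoOfSurjective π π.surjective) ρ)

section TreeExchange

variable {H : SimpleGraph V} {u v : V} {p : H.Walk u v} {g : Sym2 V}

lemma connected_deleteEdges_sup_edge (hH : H.Connected) (huv : ¬H.Adj u v) (hp : p.IsPath)
    (hg : g ∈ p.edges) : (H.deleteEdges {g} ⊔ edge u v).Connected := by
  have hne : v ≠ u := by
    rintro rfl
    simp [Walk.eq_nil_iff_nil.2 (Walk.isPath_iff_nil.1 hp)] at hg
  have hcycle : (Walk.cons (Or.inr (by simp [edge_adj, hne])) (p.mapLe le_sup_left) :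
      (H ⊔ edge u v).Walk v v).IsCycle := by
    rw [Walk.cons_isCycle_iff, Walk.edges_mapLe_eq_edges]
    exact ⟨hp.mapLe le_sup_left, fun h => huv (p.adj_of_mem_edges h).symm⟩
  have hbridge : ¬(H ⊔ edge u v).IsBridge g := fun h =>
    h.notMem_edges_of_isCycle hcycle (by simp [hg])
  have hedge : (edge u v).deleteEdges {g} = edge u v := by
    rw [deleteEdges_eq_self, Set.disjoint_singleton_right]
    intro h
    obtain rfl : g = s(u, v) := ((edgeSet_fromEdgeSet _).le h).1
    exact huv (p.edges_subset_edgeSet hg)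
  induction g with | _ x y =>
  rw [← hedge, ← deleteEdges_sup]
  exact (hH.mono le_sup_left).connected_delete_edge_of_not_isBridge hbridge

lemma isAcyclic_deleteEdges_sup_edge (hH : H.IsAcyclic) (hp : p.IsPath) (hg : g ∈ p.edges) :
    (H.deleteEdges {g} ⊔ edge u v).IsAcyclic := by
  refine (hH.anti (deleteEdges_le _)).sup_edge_of_not_reachable fun h => ?_
  induction g with | _ x y =>
  obtain ⟨q, hq⟩ := reachable_deleteEdges_iff_exists_walk.1 h
  have hqp : (q.toPath : H.Walk u v) = p :=
    congrArg Subtype.val ((hH.subsingleton_path u v).elim q.toPath ⟨p, hp⟩)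
  exact hq (q.edges_toPath_subset_edges (hqp ▸ hg))

end TreeExchange

section SpanGraph

variable {G : SimpleGraph V} {F F' T T' : Finset (Sym2 V)}

lemma spanGraph_mono (h : F ⊆ F') : spanGraph F ≤ spanGraph F' :=
  fromEdgeSet_mono (Finset.coe_subset.2 h)

lemma edgeSet_spanGraph (h : ↑T ⊆ G.edgeSet) : (spanGraph T).edgeSet = ↑T := by
  rw [spanGraph, edgeSet_fromEdgeSet]
  exact sdiff_eq_left.2 (Set.disjoint_left.2 fun e he => G.not_isDiag_of_mem_edgeSet (h he))

lemma spanGraph_insert_erase (u v : V) (g : Sym2 V) :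
    spanGraph (insert s(u, v) (T.erase g)) = (spanGraph T).deleteEdges {g} ⊔ edge u v := by
  rw [spanGraph, spanGraph, deleteEdges_fromEdgeSet, edge, ← fromEdgeSet_union,
    Set.union_singleton, Finset.coe_insert, Finset.coe_erase]

lemma mk_mem_boundary_iff {u v : V} :
    s(u, v) ∈ boundary G F ↔ G.Adj u v ∧ ¬(spanGraph F).Reachable u v := by
  constructor
  · exact fun h => ⟨h.1, h.2.2 u v rfl⟩
  · rintro ⟨hadj, hreach⟩
    refine ⟨hadj, fun hF => hreach ?_, fun x y hxy h => hreach ?_⟩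
    · exact Adj.reachable ((fromEdgeSet_adj _).2 ⟨hF, hadj.ne⟩)
    · rcases Sym2.eq_iff.1 hxy with ⟨rfl, rfl⟩ | ⟨rfl, rfl⟩
      exacts [h, h.symm]

lemma boundary_anti (h : F ⊆ F') : boundary G F' ⊆ boundary G F := by
  intro e he
  induction e with | _ u v =>
  rw [mk_mem_boundary_iff] at he ⊢
  exact he.imp_right (mt (Reachable.mono (spanGraph_mono h)))

namespace IsSpanningTree

lemma isTree (hT : IsSpanningTree G T) : (spanGraph T).IsTree := ⟨hT.2.1, hT.2.2⟩

lemma eq_of_subset (hT : IsSpanningTree G T) (hT' : IsSpanningTree G T') (h : T ⊆ T') :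
    T = T' := by
  have hmin := (isTree_iff_minimal_connected.1 hT'.isTree).eq_of_le hT.2.1 (spanGraph_mono h)
  rw [← Finset.coe_inj, ← edgeSet_spanGraph hT.1, ← edgeSet_spanGraph hT'.1, hmin]

lemma exists_exchange (hT : IsSpanningTree G T) {f : Sym2 V} (hf : f ∈ boundary G F)
    (hfT : f ∉ T) :
    ∃ g ∈ T, g ∈ boundary G F ∧ IsSpanningTree G (insert f (T.erase g)) := by
  induction f with | _ u v =>
  obtain ⟨huv, hreach⟩ := mk_mem_boundary_iff.1 hf
  obtain ⟨p, hp⟩ := (hT.2.1 u v).exists_isPath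
  obtain ⟨d, hd, hd₁, hd₂⟩ :=
    p.exists_boundary_dart {x | (spanGraph F).Reachable u x} (Reachable.refl u) hreach
  have hdT : d.edge ∈ T := by
    have := d.edge_mem
    rwa [edgeSet_spanGraph hT.1] at this
  have hnadj : ¬(spanGraph T).Adj u v := fun h => hfT ((fromEdgeSet_adj _).1 h).1
  have hdp : d.edge ∈ p.edges := List.mem_map_of_mem hd
  refine ⟨d.edge, hdT, mk_mem_boundary_iff.2 ⟨hT.1 hdT, fun h => hd₂ (hd₁.trans h)⟩, ?_, ?_⟩
  · rw [Finset.coe_insert, Finset.coe_erase]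
    exact Set.insert_subset huv (Set.sdiff_subset.trans hT.1)
  · rw [spanGraph_insert_erase]
    exact ⟨connected_deleteEdges_sup_edge hT.2.1 hnadj hp hdp,
      isAcyclic_deleteEdges_sup_edge hT.2.2 hp hdp⟩

lemma mem_boundary_iff (hT : IsSpanningTree G T) (hF : F ⊆ T) {e : Sym2 V} (he : e ∈ T) :
    e ∈ boundary G F ↔ e ∉ F := by
  refine ⟨fun h => h.2.1, fun heF => ?_⟩
  induction e with | _ u v =>
  have hadj : (spanGraph T).Adj u v := (fromEdgeSet_adj _).2 ⟨he, (G.mem_edgeSet.1 (hT.1 he)).ne⟩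
  have hbridge := isBridge_iff.1 (isAcyclic_iff_forall_isBridge.1 hT.2.2 hadj)
  refine mk_mem_boundary_iff.2 ⟨hT.1 he, fun h => hbridge (h.mono ?_)⟩
  rw [spanGraph, spanGraph, deleteEdges_fromEdgeSet]
  exact fromEdgeSet_mono (Set.subset_sdiff_singleton (Finset.coe_subset.2 hF) heF)

/-- An edge of the spanning tree `T`, regarded as an edge of `G`, i.e. as an index of a weight. -/
def treeEdge (hT : IsSpanningTree G T) (e : ↥T) : G.edgeSet :=
  ⟨e, hT.1 e.2⟩

lemma treeEdge_injective (hT : IsSpanningTree G T) : Function.Injective hT.treeEdge :=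
  fun _ _ h => Subtype.ext (Subtype.mk.inj h)

end IsSpanningTree

end SpanGraph

section InitialForest

variable {G : SimpleGraph V} {T : Finset (Sym2 V)} (π : Fin T.card ≃ ↥T)

lemma mem_initialForest {j : ℕ} (i : Fin T.card) :
    (π i).1 ∈ initialForest T π j ↔ (i : ℕ) < j := by
  simp [initialForest]

lemma initialForest_subset (j : ℕ) : initialForest T π j ⊆ T :=
  Finset.image_subset_iff.2 fun i _ => (π i).2

lemma initialForest_mono : Monotone (initialForest T π) := fun _ _ hjk =>
  Finset.image_subset_image (Finset.monotone_filter_right _ fun _ _ hi => hi.trans_le hjk)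

lemma apply_mem_boundary_initialForest_iff (hT : IsSpanningTree G T) (i j : Fin T.card) :
    (π i).1 ∈ boundary G (initialForest T π j) ↔ j ≤ i := by
  rw [hT.mem_boundary_iff (initialForest_subset π j) (π i).2, mem_initialForest, not_lt,
    Fin.val_fin_le]

end InitialForest

section Kruskal

variable [Fintype V] {G : SimpleGraph V} {T T' : Finset (Sym2 V)} {w : G.edgeSet → ℝ}

/-- The edges of `∂F` as a finset of edges of `G`, i.e. of indices of weights. -/
def boundaryFinset (G : SimpleGraph V) (F : Finset (Sym2 V)) : Finset G.edgeSet :=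
  {e | (e : Sym2 V) ∈ boundary G F}

lemma mem_boundaryFinset {F : Finset (Sym2 V)} {e : G.edgeSet} :
    e ∈ boundaryFinset G F ↔ (e : Sym2 V) ∈ boundary G F := by
  simp [boundaryFinset]

lemma card_boundaryFinset (F : Finset (Sym2 V)) :
    (boundaryFinset G F).card = (boundary G F).ncard := by
  rw [← Set.ncard_coe_finset, ← Set.ncard_image_of_injective _ Subtype.val_injective]
  congr 1
  ext e
  simpa [boundaryFinset] using fun h : e ∈ boundary G F => h.1

lemma treeWeight_insert_erase {f g : G.edgeSet} (hf : f.1 ∉ T) (hg : g.1 ∈ T) :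
    treeWeight G w (insert f.1 (T.erase g)) = treeWeight G w T + w f - w g := by
  have hfg : f ≠ g := fun h => hf (h ▸ hg)
  have hsingle (a : G.edgeSet) : ∑ e, (if e = a then w e else 0) = w a :=
    Fintype.sum_ite_eq' a w
  rw [← hsingle f, ← hsingle g, treeWeight, treeWeight, ← Finset.sum_add_distrib,
    ← Finset.sum_sub_distrib]
  refine Finset.sum_congr rfl fun e _ => ?_
  rcases eq_or_ne e f with rfl | hef
  · simp [hf, hfg]
  · rcases eq_or_ne e g with rfl | heg
    · simp [hg, hef, Subtype.coe_inj]
    · simp [hef, heg, Subtype.coe_inj]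

lemma lt_of_mem_mstEvent (hw : w ∈ mstEvent G T) {f g : G.edgeSet} (hf : f.1 ∉ T) (hg : g.1 ∈ T)
    (hfg : IsSpanningTree G (insert f.1 (T.erase g))) : w g < w f := by
  have hlt := hw.2 _ hfg fun h => hf (h ▸ Finset.mem_insert_self _ _)
  rw [treeWeight_insert_erase hf hg] at hlt
  linarith

lemma mem_mstEvent_of_forall_exists_treeWeight_lt (hT : IsSpanningTree G T)
    (hlt : ∀ T', IsSpanningTree G T' → T' ≠ T →
      ∃ T'', IsSpanningTree G T'' ∧ treeWeight G w T'' < treeWeight G w T') :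
    w ∈ mstEvent G T := by
  obtain ⟨T₀, hT₀, hmin⟩ :=
    Set.exists_min_image {T' | IsSpanningTree G T'} (treeWeight G w) (Set.toFinite _) ⟨T, hT⟩
  obtain rfl : T₀ = T := by
    by_contra hne
    obtain ⟨T', hT', hT'lt⟩ := hlt T₀ hT₀ hne
    exact (hmin T' hT').not_gt hT'lt
  refine ⟨hT, fun T' hT' hne => ?_⟩
  obtain ⟨T'', hT'', hT''lt⟩ := hlt T' hT' hne
  exact (hmin T'' hT'').trans_lt hT''lt

lemma mem_orderEvent_iff (hT : IsSpanningTree G T) {π : Fin T.card ≃ ↥T} :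
    (w ∈ orderEvent G fun i => (π i).1) ↔ StrictMono fun i => w (hT.treeEdge (π i)) := by
  constructor
  · exact fun h i j hij => h i j _ _ hij rfl rfl
  · rintro h i j ⟨_, _⟩ ⟨_, _⟩ hij rfl rfl
    exact h hij

lemma pairwise_disjoint_orderEvent (hT : IsSpanningTree G T) :
    Pairwise (Function.onFun Disjoint fun π : Fin T.card ≃ ↥T =>
      orderEvent G fun i => (π i).1) := by
  intro π ρ hπρ
  refine Set.disjoint_left.2 fun w hwπ hwρ => hπρ ?_
  rw [mem_orderEvent_iff hT] at hwπ hwρ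
  have hinj : Function.Injective fun e => w (hT.treeEdge e) :=
    .of_comp_right hwπ.injective π.surjective
  exact (existsUnique_equiv_strictMono (Fintype.card_coe T) hinj).unique hwπ hwρ

variable {π : Fin T.card ≃ ↥T}

lemma treeEdge_mem_boundaryFinset_iff (hT : IsSpanningTree G T) (i j : Fin T.card) :
    hT.treeEdge (π i) ∈ boundaryFinset G (initialForest T π j) ↔ j ≤ i :=
  mem_boundaryFinset.trans (apply_mem_boundary_initialForest_iff π hT i j)

lemma mem_strictMinEvent_of_mem_mstEvent (hw : w ∈ mstEvent G T)
    (hmono : StrictMono fun i => w (hw.1.treeEdge (π i))) (j : Fin T.card) :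
    w ∈ strictMinEvent (boundaryFinset G (initialForest T π j)) (hw.1.treeEdge (π j)) := by
  intro f hf hfj
  by_cases hfT : f.1 ∈ T
  · obtain ⟨i, hi⟩ := π.surjective ⟨f, hfT⟩
    obtain rfl : hw.1.treeEdge (π i) = f := congrArg hw.1.treeEdge hi
    have hji : j ≤ i := (treeEdge_mem_boundaryFinset_iff hw.1 i j).1 hf
    exact hmono (hji.lt_of_ne fun h => hfj (by rw [h]))
  · obtain ⟨g, hgT, hg, hfg⟩ := hw.1.exists_exchange (mem_boundaryFinset.1 hf) hfT
    obtain ⟨i, hi⟩ := π.surjective ⟨g, hgT⟩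
    obtain rfl : (π i).1 = g := congrArg Subtype.val hi
    have hji : j ≤ i := (apply_mem_boundary_initialForest_iff π hw.1 i j).1 hg
    exact (hmono.monotone hji).trans_lt (lt_of_mem_mstEvent hw hfT hgT hfg)

lemma exists_treeWeight_lt (hT : IsSpanningTree G T)
    (hw : ∀ j : Fin T.card,
      w ∈ strictMinEvent (boundaryFinset G (initialForest T π j)) (hT.treeEdge (π j)))
    (hT' : IsSpanningTree G T') (hne : T' ≠ T) :
    ∃ T'', IsSpanningTree G T'' ∧ treeWeight G w T'' < treeWeight G w T' := by
  obtain ⟨e, heT, heT'⟩ := Finset.not_subset.1 fun h => hne (hT.eq_of_subset hT' h).symm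
  obtain ⟨j, hj⟩ := π.surjective ⟨e, heT⟩
  obtain rfl : (π j).1 = e := congrArg Subtype.val hj
  obtain ⟨g, hgT', hg, hspan⟩ :=
    hT'.exists_exchange ((apply_mem_boundary_initialForest_iff π hT j j).2 le_rfl) heT'
  let g' : G.edgeSet := ⟨g, hT'.1 hgT'⟩
  have hlt : w (hT.treeEdge (π j)) < w g' :=
    hw j g' (mem_boundaryFinset.2 hg) fun h => heT' (congrArg Subtype.val h ▸ hgT')
  refine ⟨_, hspan, ?_⟩
  have hweight := treeWeight_insert_erase (w := w) (f := hT.treeEdge (π j)) (g := g') heT' hgT'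
  exact hweight.trans_lt (by linarith)

theorem mstEvent_inter_orderEvent (hT : IsSpanningTree G T) (π : Fin T.card ≃ ↥T) :
    (mstEvent G T ∩ orderEvent G fun i => (π i).1) =
      ⋂ j : Fin T.card, strictMinEvent (boundaryFinset G (initialForest T π j))
        (hT.treeEdge (π j)) := by
  ext w
  rw [Set.mem_inter_iff, mem_orderEvent_iff hT, Set.mem_iInter]
  refine ⟨fun ⟨hmst, hmono⟩ => mem_strictMinEvent_of_mem_mstEvent hmst hmono,
    fun hw => ⟨?_, fun i j hij => ?_⟩⟩
  · exact mem_mstEvent_of_forall_exists_treeWeight_lt hT fun _ => exists_treeWeight_lt hT hw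
  · exact hw i _ ((treeEdge_mem_boundaryFinset_iff hT j i).2 hij.le)
      ((hT.treeEdge_injective.comp π.injective).ne hij.ne')

end Kruskal

section Measure

variable [Fintype V] {G : SimpleGraph V} {T : Finset (Sym2 V)} {μ : Measure (G.edgeSet → ℝ)}

lemma measurableSet_mstEvent_inter_orderEvent (hT : IsSpanningTree G T) (π : Fin T.card ≃ ↥T) :
    MeasurableSet (mstEvent G T ∩ orderEvent G fun i => (π i).1) := by
  rw [mstEvent_inter_orderEvent hT]
  exact .iInter fun j => measurableSet_strictMinEvent _ _

lemma measureReal_mstEvent_inter_orderEvent [IsProbabilityMeasure μ] (hμ : IsExchangeable μ)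
    (hinj : ∀ᵐ w ∂μ, Function.Injective w) (hT : IsSpanningTree G T) (π : Fin T.card ≃ ↥T) :
    μ.real (mstEvent G T ∩ orderEvent G fun i => (π i).1) =
      ∏ j ∈ Finset.range T.card, 1 / ((boundary G (initialForest T π j)).ncard : ℝ) := by
  have hanti : Antitone fun j : Fin T.card => boundaryFinset G (initialForest T π j) :=
    fun i j hij e he => mem_boundaryFinset.2
      (boundary_anti (initialForest_mono π hij) (mem_boundaryFinset.1 he))
  rw [mstEvent_inter_orderEvent hT, measureReal_def, measure_iInter_strictMinEvent hμ hinj hanti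
    (treeEdge_mem_boundaryFinset_iff hT), measure_univ, one_mul, ENNReal.toReal_prod,
    Finset.prod_range]
  simp only [ENNReal.toReal_inv, ENNReal.toReal_natCast, card_boundaryFinset, one_div]

lemma mstEvent_ae_eq_iUnion (hinj : ∀ᵐ w ∂μ, Function.Injective w) (hT : IsSpanningTree G T) :
    mstEvent G T =ᵐ[μ] ⋃ π : Fin T.card ≃ ↥T, mstEvent G T ∩ orderEvent G fun i => (π i).1 := by
  filter_upwards [hinj] with w hw
  obtain ⟨π, hπ, -⟩ := existsUnique_equiv_strictMono (Fintype.card_coe T)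
    (hw.comp hT.treeEdge_injective)
  refine propext ⟨fun h => Set.mem_iUnion.2 ⟨π, h, (mem_orderEvent_iff hT).2 hπ⟩, fun h => ?_⟩
  obtain ⟨_, hmst, _⟩ := Set.mem_iUnion.1 h
  exact hmst

theorem internal_formula_general [IsProbabilityMeasure μ] (hμ : IsExchangeable μ)
    (hinj : ∀ᵐ w ∂μ, Function.Injective w) (hT : IsSpanningTree G T) :
    (∀ π : Fin T.card ≃ ↥T,
      μ.real (mstEvent G T ∩ orderEvent G fun i => (π i).1) =
        ∏ j ∈ Finset.range T.card, 1 / ((boundary G (initialForest T π j)).ncard : ℝ)) ∧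
    μ.real (mstEvent G T) = ∑ π : Fin T.card ≃ ↥T, ∏ j ∈ Finset.range T.card,
      1 / ((boundary G (initialForest T π j)).ncard : ℝ) := by
  have hπ := measureReal_mstEvent_inter_orderEvent hμ hinj hT
  refine ⟨hπ, ?_⟩
  calc μ.real (mstEvent G T)
      = μ.real (⋃ π : Fin T.card ≃ ↥T, mstEvent G T ∩ orderEvent G fun i => (π i).1) :=
        measureReal_congr (mstEvent_ae_eq_iUnion hinj hT)
    _ = ∑ π : Fin T.card ≃ ↥T, μ.real (mstEvent G T ∩ orderEvent G fun i => (π i).1) :=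
        measureReal_iUnion_fintype
          (fun _ _ h => (pairwise_disjoint_orderEvent hT h).mono Set.inter_subset_right
            Set.inter_subset_right)
          fun π => measurableSet_mstEvent_inter_orderEvent hT π
    _ = _ := Fintype.sum_congr _ _ hπ

end Measure

/-- The internal formula: for a spanning tree `T` of a finite connected graph `G` and any
ordering `π` of the tree edges, the probability that `T` is the unique MST with the
tree-edge weights in order `π` equals `∏_{j=0}^{n-2} 1/|∂F_j|`; summing over all
orderings gives `P_MST(T; G)`. -/
theorem internal_formula [Fintype V] (G : SimpleGraph V) (hG : G.Connected)
    (T : Finset (Sym2 V)) (hT : IsSpanningTree G T) :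
    (∀ π : Fin T.card ≃ ↥T,
      (edgeUniform G.edgeSet
          (mstEvent G T ∩ orderEvent G fun i => (π i).1)).toReal
        = ∏ j ∈ Finset.range T.card,
            1 / ((boundary G (initialForest T π j)).ncard : ℝ)) ∧
    mstProb G T = ∑ π : Fin T.card ≃ ↥T, ∏ j ∈ Finset.range T.card,
      1 / ((boundary G (initialForest T π j)).ncard : ℝ) :=
  internal_formula_general (isExchangeable_pi _) (ae_injective_pi _) hT

end RST
end
end

section
/- Let G be a finite connected simple graph containing the three edges e_{12}, e_{23}, e_{13} of a triangle on vertices v_1, v_2, v_3. Suppose T_1, T_2, T_3 are pairwise vertex-disjoint subtrees of G whose vertex sets partition V(G), with v_i a vertex of T_i for i = 1, 2, 3, and such that S = T_1 ∪ T_2 ∪ T_3 ∪ {e_{12}, e_{23}} and S' = T_1 ∪ T_2 ∪ T_3 ∪ {e_{13}, e_{23}} are spanning trees of G. Assume further that G contains at least one edge other than e_{12} with one endpoint in T_1 and the other in T_2, and that e_{13} is the only edge of G with one endpoint in T_1 and the other in T_3. Then P_MST(S;G) > P_MST(S';G). -/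
open MeasureTheory SimpleGraph
open scoped Classical

noncomputable section

namespace RST

variable {V : Type*}

/-!
A spanning tree has minimum weight as soon as no single exchange of a tree edge for a non-tree edge
improves it. So if a permutation `σ` of the edges of `G` carries every exchange available in `S` to
one available in `S'`, then permuting the weights by `σ` maps the event that `S'` is minimal into
the event that `S` is. If moreover some exchange in `S'` does not come from one in `S`, the
inclusion misses a nonempty open set of weights, and the inequality of probabilities is strict.

For a triangle edge rotation, `σ` swaps `e₁₂` and `e₁₃`. A spanning tree containing `e₁₂` and `e₂₃`
stays one when `e₁₂` becomes `e₁₃`; one obtained from `S` by exchanging `e₂₃` for `f ≠ e₁₃` reaches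
`T₃` only through an edge `f` between `T₂` and `T₃`, so there too `e₁₂` may become `e₁₃`. A second
edge between `T₁` and `T₂` can replace `e₂₃` in `S'` but not in `S`.
-/

/-! ### Spanning trees and exchanges -/

lemma spanGraph_adj {T : Finset (Sym2 V)} {x y : V} :
    (spanGraph T).Adj x y ↔ s(x, y) ∈ T ∧ x ≠ y := by
  simp [spanGraph]

lemma spanGraph_mono_s6 {S T : Finset (Sym2 V)} (h : S ⊆ T) : spanGraph S ≤ spanGraph T :=
  fromEdgeSet_mono (Finset.coe_subset.2 h)

lemma spanGraph_insert (x y : V) (T : Finset (Sym2 V)) :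
    spanGraph (insert s(x, y) T) = spanGraph T ⊔ edge x y := by
  ext u v
  simp only [spanGraph_adj, sup_adj, edge_adj, Finset.mem_insert, Sym2.eq_iff]
  grind

lemma spanGraph_reachable_of_mem {T : Finset (Sym2 V)} {x y : V} (h : s(x, y) ∈ T) :
    (spanGraph T).Reachable x y := by
  rcases eq_or_ne x y with rfl | hxy
  · rfl
  · exact (spanGraph_adj.2 ⟨h, hxy⟩).reachable

lemma edgeSet_spanGraph_s6 {G : SimpleGraph V} {T : Finset (Sym2 V)} (hT : ↑T ⊆ G.edgeSet) :
    (spanGraph T).edgeSet = T := by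
  ext ⟨x, y⟩
  exact spanGraph_adj.trans (and_iff_left_of_imp fun h ↦ (hT h).ne)

lemma isTree_of_isAcyclic_of_card {H : SimpleGraph V} (hH : H.IsAcyclic)
    (hcard : Nat.card H.edgeSet + 1 = Nat.card V) : H.IsTree := by
  have hV : Nat.card V ≠ 0 := by lia
  obtain ⟨_, _⟩ := Nat.card_ne_zero.1 hV
  obtain ⟨F, hHF, -, hF⟩ := connected_top.exists_isTree_le_of_le_of_isAcyclic le_top hH
  have hFcard := (isTree_iff_connected_and_card.1 hF).2
  have hEq : H.edgeSet = F.edgeSet :=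
    Set.eq_of_subset_of_ncard_le (edgeSet_mono hHF) (by
      rw [← Nat.card_coe_set_eq, ← Nat.card_coe_set_eq]; lia)
  rwa [edgeSet_inj.1 hEq]

/-- `f ∉ T` may replace `e ∈ T` in the spanning tree `T`: a basis exchange in the graphic matroid
of `G`. -/
def IsExchange (G : SimpleGraph V) (T : Finset (Sym2 V)) (e f : Sym2 V) : Prop :=
  e ∈ T ∧ f ∉ T ∧ IsSpanningTree G (insert f (T.erase e))

namespace IsSpanningTree

variable {G : SimpleGraph V} {S T : Finset (Sym2 V)}

lemma card_add_one [Finite V] (hT : IsSpanningTree G T) : T.card + 1 = Nat.card V := by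
  simpa [edgeSet_spanGraph_s6 hT.1] using
    (isTree_iff_connected_and_card.1 (IsTree.mk hT.2.1 hT.2.2)).2

lemma not_reachable_erase (hT : IsSpanningTree G T) {x y : V} (h : s(x, y) ∈ T) :
    ¬ (spanGraph (T.erase s(x, y))).Reachable x y := by
  have hbridge : (spanGraph T).IsBridge s(x, y) :=
    isAcyclic_iff_forall_isBridge.1 hT.2.2 (by rwa [edgeSet_spanGraph_s6 hT.1])
  rw [isBridge_iff] at hbridge
  convert hbridge using 2
  ext u v
  simp only [spanGraph_adj, deleteEdges_adj, Finset.mem_erase, Set.mem_singleton_iff]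
  tauto

lemma insert_erase [Finite V] (hT : IsSpanningTree G T) {e : Sym2 V} (he : e ∈ T) {x y : V}
    (hxy : s(x, y) ∈ G.edgeSet) (hsep : ¬ (spanGraph (T.erase e)).Reachable x y) :
    IsSpanningTree G (insert s(x, y) (T.erase e)) := by
  have hsub : (↑(insert s(x, y) (T.erase e)) : Set (Sym2 V)) ⊆ G.edgeSet := by
    simp only [Finset.coe_insert, Finset.coe_erase]
    exact Set.insert_subset hxy (Set.sdiff_subset.trans hT.1)
  have hacyclic : (spanGraph (insert s(x, y) (T.erase e))).IsAcyclic := by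
    rw [spanGraph_insert]
    exact (hT.2.2.anti (spanGraph_mono_s6 (T.erase_subset e))).sup_edge_of_not_reachable hsep
  have hcard : (insert s(x, y) (T.erase e)).card = T.card := by
    rw [Finset.card_insert_of_notMem (mt spanGraph_reachable_of_mem hsep),
      Finset.card_erase_add_one he]
  have htree := isTree_of_isAcyclic_of_card hacyclic <| by
    rw [edgeSet_spanGraph_s6 hsub, Nat.card_coe_set_eq, Set.ncard_coe_finset, hcard, hT.card_add_one]
  exact ⟨hsub, htree.connected, htree.isAcyclic⟩

lemma insert_of_insert [Finite V] {e : Sym2 V} (hT : IsSpanningTree G (insert e T)) (he : e ∉ T)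
    {x y : V} (hxy : s(x, y) ∈ G.edgeSet) (hsep : ¬ (spanGraph T).Reachable x y) :
    IsSpanningTree G (insert s(x, y) T) := by
  rw [← Finset.erase_insert he] at hsep ⊢
  exact hT.insert_erase (Finset.mem_insert_self e T) hxy hsep

lemma exists_isExchange_symm [Finite V] (hS : IsSpanningTree G S) (hT : IsSpanningTree G T)
    {f : Sym2 V} (hfT : f ∈ T) (hfS : f ∉ S) : ∃ e, IsExchange G S e f ∧ IsExchange G T f e := by
  obtain ⟨x, y⟩ := f
  obtain ⟨p, hp⟩ := (hS.2.1.preconnected x y).exists_isPath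
  -- The path in `S` between the ends of `f` leaves the component of `T - f` it starts in.
  obtain ⟨⟨⟨u, v⟩, huv⟩, hdart, hu, hv⟩ := p.exists_boundary_dart
    {z | (spanGraph (T.erase s(x, y))).Reachable x z} (Reachable.refl x)
    (hT.not_reachable_erase hfT)
  have heS : s(u, v) ∈ S := (spanGraph_adj.1 huv).1
  have hsepT : ¬ (spanGraph (T.erase s(x, y))).Reachable u v := fun h ↦ hv (hu.trans h)
  have hsepS : ¬ (spanGraph (S.erase s(u, v))).Reachable x y := by
    intro h
    obtain ⟨q, hq⟩ := h.exists_isPath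
    have hle := spanGraph_mono_s6 (S.erase_subset s(u, v))
    have hpq : p = q.mapLe hle := congrArg Subtype.val
      ((hS.2.2.subsingleton_path x y).elim ⟨p, hp⟩ ⟨q.mapLe hle, (Walk.isPath_mapLe hle).2 hq⟩)
    have huvp : s(u, v) ∈ p.edges := List.mem_map.2 ⟨_, hdart, rfl⟩
    rw [hpq, Walk.edges_mapLe_eq_edges] at huvp
    exact Finset.notMem_erase _ _ (spanGraph_adj.1 (q.adj_of_mem_edges huvp)).1
  have heT : s(u, v) ∉ T := fun h ↦ hsepT <| spanGraph_reachable_of_mem <|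
    Finset.mem_erase.2 ⟨ne_of_mem_of_not_mem heS hfS, h⟩
  exact ⟨s(u, v), ⟨heS, hfS, hS.insert_erase heS (hT.1 hfT) hsepS⟩,
    ⟨hfT, heT, hT.insert_erase hfT (hS.1 heS) hsepT⟩⟩

end IsSpanningTree

/-! ### Minimum spanning trees -/

section MinimumSpanningTree

variable [Fintype V] {G : SimpleGraph V} {S T : Finset (Sym2 V)} {w : G.edgeSet → ℝ}

lemma treeWeight_insert (w : G.edgeSet → ℝ) {e : G.edgeSet} (he : ↑e ∉ T) :
    treeWeight G w (insert ↑e T) = w e + treeWeight G w T := by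
  have hfilter : (Finset.univ.filter fun x : G.edgeSet ↦ (x : Sym2 V) ∈ insert ↑e T) =
      insert e (Finset.univ.filter fun x : G.edgeSet ↦ (x : Sym2 V) ∈ T) := by
    ext x
    simp [Subtype.ext_iff]
  rw [treeWeight, treeWeight, ← Finset.sum_filter, ← Finset.sum_filter, hfilter,
    Finset.sum_insert (by simpa using he)]

lemma treeWeight_exchange (w : G.edgeSet → ℝ) {e f : G.edgeSet} (he : ↑e ∈ T) (hf : ↑f ∉ T) :
    treeWeight G w (insert ↑f (T.erase ↑e)) + w e = treeWeight G w T + w f := by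
  have hT := treeWeight_insert w (Finset.notMem_erase (↑e) T)
  rw [Finset.insert_erase he] at hT
  rw [hT, treeWeight_insert w (mt Finset.mem_of_mem_erase hf)]
  ring

lemma exists_treeWeight_lt_of_ne (hS : IsSpanningTree G S)
    (hw : ∀ e f : G.edgeSet, IsExchange G S e f → w e < w f)
    (hT : IsSpanningTree G T) (hne : T ≠ S) :
    ∃ T', IsSpanningTree G T' ∧ treeWeight G w T' < treeWeight G w T := by
  have hnot : ¬ T ⊆ S := fun h ↦ hne <| Finset.eq_of_subset_of_card_le h <| by
    have := hS.card_add_one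
    have := hT.card_add_one
    lia
  obtain ⟨f, hfT, hfS⟩ := Finset.not_subset.1 hnot
  obtain ⟨e, hSe, hTe⟩ := hS.exists_isExchange_symm hT hfT hfS
  refine ⟨_, hTe.2.2, ?_⟩
  have hlt := hw ⟨e, hS.1 hSe.1⟩ ⟨f, hT.1 hfT⟩ hSe
  have hweight := treeWeight_exchange w (e := ⟨f, hT.1 hfT⟩) (f := ⟨e, hS.1 hSe.1⟩) hfT hTe.2.1
  linarith

lemma mem_mstEvent_iff (hS : IsSpanningTree G S) :
    w ∈ mstEvent G S ↔ ∀ e f : G.edgeSet, IsExchange G S e f → w e < w f := by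
  constructor
  · rintro hw e f ⟨he, hf, hST⟩
    have hlt := hw.2 _ hST fun h ↦ hf (h ▸ Finset.mem_insert_self _ _)
    linarith [treeWeight_exchange w he hf]
  · intro hw
    obtain ⟨T₀, hT₀, hmin⟩ := Set.exists_min_image {T | IsSpanningTree G T} (treeWeight G w)
      (Set.toFinite _) ⟨S, hS⟩
    have eq_S_of_min {T} (hT : IsSpanningTree G T)
        (hle : treeWeight G w T ≤ treeWeight G w T₀) : T = S := by
      by_contra hne
      obtain ⟨T', hT', hlt⟩ := exists_treeWeight_lt_of_ne hS hw hT hne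
      exact absurd (hmin T' hT') (hlt.trans_le hle).not_ge
    obtain rfl := eq_S_of_min hT₀ le_rfl
    exact ⟨hS, fun T hT hne ↦ lt_of_not_ge fun hle ↦ hne (eq_S_of_min hT hle)⟩

lemma isOpen_mstEvent (G : SimpleGraph V) (T : Finset (Sym2 V)) : IsOpen (mstEvent G T) := by
  have hcont (T' : Finset (Sym2 V)) : Continuous fun w ↦ treeWeight G w T' := by
    refine continuous_finsetSum _ fun e _ ↦ ?_
    split_ifs <;> fun_prop
  simp only [mstEvent, Set.ofPred_and, Set.ofPred_forall]
  exact isOpen_const.inter <| isOpen_iInter_of_finite fun T' ↦ isOpen_iInter_of_finite fun _ ↦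
    isOpen_iInter_of_finite fun _ ↦ isOpen_lt (hcont T) (hcont T')

lemma exists_mem_mstEvent_lt (hS : IsSpanningTree G S) {e f : G.edgeSet} (he : ↑e ∈ S)
    (hf : ↑f ∉ S) (hef : ¬ IsExchange G S e f) :
    ∃ w ∈ mstEvent G S, (∀ x, w x ∈ Set.Ioo (0 : ℝ) 1) ∧ w f < w e := by
  -- With these weights, the only exchange that could improve `S` is that of `e` for `f`.
  refine ⟨fun x ↦ if ↑x ∈ S then if x = e then 3 / 5 else 1 / 5
    else if x = f then 2 / 5 else 4 / 5, ?_, ?_, ?_⟩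
  · rw [mem_mstEvent_iff hS]
    rintro x y hxy
    have hne : ¬ (x = e ∧ y = f) := by
      rintro ⟨rfl, rfl⟩
      exact hef hxy
    simp only [hxy.1, hxy.2.1, if_true, if_false]
    split_ifs <;> norm_num
    exact hne ⟨‹x = e›, ‹y = f›⟩
  · intro x
    dsimp only
    split_ifs <;> norm_num
  · norm_num [he, hf]

end MinimumSpanningTree

/-! ### Uniform weights -/

section EdgeUniform

variable {E : Type*} [Fintype E]

instance : IsProbabilityMeasure (edgeUniform E) := by
  have : IsProbabilityMeasure ((volume : Measure ℝ).restrict (Set.Icc 0 1)) := ⟨by simp⟩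
  unfold edgeUniform
  infer_instance

lemma edgeUniform_preimage_comp (σ : Equiv.Perm E) (M : Set (E → ℝ)) :
    edgeUniform E ((· ∘ σ) ⁻¹' M) = edgeUniform E M :=
  let μ : E → Measure ℝ := fun _ ↦ volume.restrict (Set.Icc 0 1)
  (measurePreserving_arrowCongr' μ μ σ.symm (MeasurableEquiv.refl ℝ)
    fun _ ↦ MeasurePreserving.id _).measure_preimage_equiv M

lemma edgeUniform_pos_of_isOpen {U : Set (E → ℝ)} (hU : IsOpen U) {w : E → ℝ} (hw : w ∈ U)
    (hcube : ∀ e, w e ∈ Set.Ioo (0 : ℝ) 1) : 0 < edgeUniform E U := by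
  have hopen : IsOpen (U ∩ Set.univ.pi fun _ ↦ Set.Ioo (0 : ℝ) 1) :=
    hU.inter (isOpen_set_pi Set.finite_univ fun _ _ ↦ isOpen_Ioo)
  rw [edgeUniform, ← Measure.restrict_pi_pi, ← volume_pi, Measure.restrict_apply hU.measurableSet]
  exact (hopen.measure_pos volume ⟨w, hw, fun e _ ↦ hcube e⟩).trans_le <| measure_mono <|
    Set.inter_subset_inter_right U <| Set.pi_mono fun _ _ ↦ Set.Ioo_subset_Icc_self

end EdgeUniform

theorem mstProb_lt_of_isExchange [Fintype V] {G : SimpleGraph V} {S S' : Finset (Sym2 V)}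
    (hS : IsSpanningTree G S) (σ : Equiv.Perm G.edgeSet)
    (hσ : ∀ e f : G.edgeSet, IsExchange G S e f → IsExchange G S' (σ e) (σ f))
    {e f : G.edgeSet} (he : ↑e ∈ S) (hf : ↑f ∉ S) (hef : ¬ IsExchange G S e f)
    (hef' : IsExchange G S' (σ e) (σ f)) : mstProb G S' < mstProb G S := by
  obtain ⟨w, hwS, hcube, hwfe⟩ := exists_mem_mstEvent_lt hS he hf hef
  set M' : Set (G.edgeSet → ℝ) := (· ∘ σ.symm) ⁻¹' mstEvent G S'
  set N : Set (G.edgeSet → ℝ) := mstEvent G S ∩ {u | u f < u e}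
  have lt_of_mem_M' {u} (hu : u ∈ M') {x y : G.edgeSet} (hxy : IsExchange G S' (σ x) (σ y)) :
      u x < u y := by
    simpa using (mem_mstEvent_iff hu.1).1 hu (σ x) (σ y) hxy
  have hM' : M' ⊆ mstEvent G S := fun u hu ↦
    (mem_mstEvent_iff hS).2 fun x y hxy ↦ lt_of_mem_M' hu (hσ x y hxy)
  have hdisj : Disjoint M' N := Set.disjoint_left.2 fun u hu huN ↦
    (lt_of_mem_M' hu hef').not_gt huN.2
  have hNopen : IsOpen N :=
    (isOpen_mstEvent G S).inter (isOpen_lt (continuous_apply f) (continuous_apply e))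
  have hNpos : 0 < edgeUniform G.edgeSet N := edgeUniform_pos_of_isOpen hNopen ⟨hwS, hwfe⟩ hcube
  refine ENNReal.toReal_strict_mono (measure_ne_top _ _) ?_
  calc edgeUniform G.edgeSet (mstEvent G S')
      = edgeUniform G.edgeSet M' := (edgeUniform_preimage_comp σ.symm _).symm
    _ < edgeUniform G.edgeSet M' + edgeUniform G.edgeSet N :=
        ENNReal.lt_add_right (measure_ne_top _ _) hNpos.ne'
    _ = edgeUniform G.edgeSet (M' ∪ N) := (measure_union hdisj hNopen.measurableSet).symm
    _ ≤ edgeUniform G.edgeSet (mstEvent G S) :=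
        measure_mono (Set.union_subset hM' Set.inter_subset_left)

lemma mstProb_lt_of_isExchange_swap [Fintype V] {G : SimpleGraph V} {S S' : Finset (Sym2 V)}
    {a c : Sym2 V} (ha : a ∈ G.edgeSet) (hc : c ∈ G.edgeSet) (hS : IsSpanningTree G S)
    (hswap : ∀ e f, IsExchange G S e f →
      IsExchange G S' (Equiv.swap a c e) (Equiv.swap a c f))
    {e f : Sym2 V} (he : e ∈ S) (hfG : f ∈ G.edgeSet) (hf : f ∉ S) (hef : ¬ IsExchange G S e f)
    (hef' : IsExchange G S' (Equiv.swap a c e) (Equiv.swap a c f)) :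
    mstProb G S' < mstProb G S := by
  let σ : Equiv.Perm G.edgeSet := Equiv.swap ⟨a, ha⟩ ⟨c, hc⟩
  have hσ (x : G.edgeSet) : (σ x : Sym2 V) = Equiv.swap a c x :=
    (Subtype.val_injective.swap_apply ⟨a, ha⟩ ⟨c, hc⟩ x).symm
  refine mstProb_lt_of_isExchange hS σ (fun x y hxy ↦ ?_) (e := ⟨e, hS.1 he⟩) (f := ⟨f, hfG⟩)
    he hf hef ?_
  · simpa only [hσ] using hswap x y hxy
  · simpa only [hσ] using hef'

/-! ### Rotating a triangle edge -/

lemma exists_crossing_of_reachable {T : Finset (Sym2 V)} {A : Set V} {x y : V}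
    (hxy : (spanGraph T).Reachable x y) (hx : x ∈ A) (hy : y ∉ A) :
    ∃ u ∈ A, ∃ v ∉ A, s(u, v) ∈ T := by
  obtain ⟨p⟩ := hxy
  obtain ⟨d, -, hfst, hsnd⟩ := p.exists_boundary_dart A hx hy
  exact ⟨d.fst, hfst, d.snd, hsnd, (spanGraph_adj.1 d.adj).1⟩

/-- No edge of `T` joins `A` to its complement: `A` is a union of connected components of
`spanGraph T`. Such a cut certifies that vertices are not joined in `spanGraph T`. -/
def NoCrossing (T : Finset (Sym2 V)) (A : Set V) : Prop :=
  ∀ x y, s(x, y) ∈ T → (x ∈ A ↔ y ∈ A)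

namespace NoCrossing

variable {T T' : Finset (Sym2 V)} {A B : Set V} {x y : V}

lemma of_forall_mem (hT : ∀ e ∈ T, ∀ x, x ∈ e → x ∈ A) : NoCrossing T A := fun x y hxy ↦
  iff_of_true (hT _ hxy x (Sym2.mem_mk_left x y)) (hT _ hxy y (Sym2.mem_mk_right x y))

lemma of_disjoint (hT : ∀ e ∈ T, ∀ x, x ∈ e → x ∈ B) (hAB : Disjoint A B) : NoCrossing T A :=
  fun x y hxy ↦ iff_of_false (hAB.notMem_of_mem_right (hT _ hxy x (Sym2.mem_mk_left x y)))
    (hAB.notMem_of_mem_right (hT _ hxy y (Sym2.mem_mk_right x y)))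

lemma mono (hT : NoCrossing T A) (h : T' ⊆ T) : NoCrossing T' A := fun x y hxy ↦ hT x y (h hxy)

lemma union (hT : NoCrossing T A) (hT' : NoCrossing T' A) : NoCrossing (T ∪ T') A := fun x y hxy ↦
  (Finset.mem_union.1 hxy).elim (hT x y) (hT' x y)

lemma insert (hT : NoCrossing T A) (hxy : x ∈ A ↔ y ∈ A) : NoCrossing (insert s(x, y) T) A := by
  intro u v huv
  rcases Finset.mem_insert.1 huv with heq | hmem
  · rcases Sym2.eq_iff.1 heq with ⟨rfl, rfl⟩ | ⟨rfl, rfl⟩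
    exacts [hxy, hxy.symm]
  · exact hT u v hmem

lemma not_reachable (hT : NoCrossing T A) (hx : x ∈ A) (hy : y ∉ A) :
    ¬ (spanGraph T).Reachable x y := by
  intro hxy
  obtain ⟨u, hu, v, hv, huv⟩ := exists_crossing_of_reachable hxy hx hy
  exact hv ((hT u v huv).1 hu)

lemma not_isSpanningTree {G : SimpleGraph V} (hT : NoCrossing T A) (hx : x ∈ A) (hy : y ∉ A) :
    ¬ IsSpanningTree G T :=
  fun h ↦ hT.not_reachable hx hy (h.2.1.preconnected x y)

lemma notMem (hT : NoCrossing T A) (hxy : ¬ (x ∈ A ↔ y ∈ A)) : s(x, y) ∉ T := mt (hT x y) hxy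

end NoCrossing

section Rotation

variable {G : SimpleGraph V} {T t : Finset (Sym2 V)}

lemma isExchange_swap {a c : Sym2 V} (ha : a ∉ T) (hc : c ∉ T)
    (hS : IsSpanningTree G (insert a T))
    (hrot : ∀ e ∈ T, ∀ f ∉ insert a T, f ≠ c → IsSpanningTree G (insert a (insert f (T.erase e))) →
      IsSpanningTree G (insert c (insert f (T.erase e))))
    {e f : Sym2 V} (hef : IsExchange G (insert a T) e f) :
    IsExchange G (insert c T) (Equiv.swap a c e) (Equiv.swap a c f) := by
  obtain ⟨he, hf, htree⟩ := hef
  have hfa : f ≠ a := by grind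
  rcases eq_or_ne e a with rfl | hea <;> rcases eq_or_ne f c with rfl | hfc
  · have hset : insert e ((insert f T).erase f) = insert e T := by grind
    rw [Equiv.swap_apply_left, Equiv.swap_apply_right]
    exact ⟨by grind, by grind, by rwa [hset]⟩
  · have hset : insert f ((insert c T).erase c) = insert f ((insert e T).erase e) := by grind
    rw [Equiv.swap_apply_left, Equiv.swap_apply_of_ne_of_ne hfa hfc]
    exact ⟨by grind, by grind, by rwa [hset]⟩
  · have hset : insert a ((insert f T).erase e) = insert f ((insert a T).erase e) := by grind
    rw [Equiv.swap_apply_right, Equiv.swap_apply_of_ne_of_ne hea (by grind)]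
    exact ⟨by grind, by grind, by rwa [hset]⟩
  · have hset (x : Sym2 V) (hx : e ≠ x) :
        insert f ((insert x T).erase e) = insert x (insert f (T.erase e)) := by grind
    have hec : e ≠ c := by grind
    rw [Equiv.swap_apply_of_ne_of_ne hea hec, Equiv.swap_apply_of_ne_of_ne hfa hfc]
    rw [hset a hea] at htree
    refine ⟨by grind, by grind, ?_⟩
    rw [hset c hec]
    exact hrot e (by grind) f hf hfc htree

lemma not_isExchange_of_noCrossing {e : Sym2 V} {A : Set V} {x y u v : V} (hT : NoCrossing T A)
    (hxy : x ∈ A ↔ y ∈ A) (hu : u ∈ A) (hv : v ∉ A) : ¬ IsExchange G (insert e T) e s(x, y) :=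
  fun h ↦ ((hT.mono (Finset.erase_insert_subset e T)).insert hxy).not_isSpanningTree hu hv h.2.2

variable [Finite V]

lemma IsSpanningTree.isExchange_of_noCrossing {e : Sym2 V} {A : Set V} {x y : V}
    (hS : IsSpanningTree G (insert e T)) (hT : NoCrossing T A) (hx : x ∉ A) (hy : y ∈ A)
    (hxy : s(x, y) ∈ G.edgeSet) (hne : s(x, y) ≠ e) : IsExchange G (insert e T) e s(x, y) := by
  have hmem : s(x, y) ∉ insert e T := by
    rw [Finset.mem_insert, not_or]
    exact ⟨hne, hT.notMem fun h ↦ hx (h.2 hy)⟩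
  exact ⟨Finset.mem_insert_self e T, hmem, hS.insert_erase (Finset.mem_insert_self e T) hxy
    ((hT.mono (Finset.erase_insert_subset e T)).not_reachable hy hx ·.symm)⟩

variable {v₁ v₂ v₃ : V} {A₁ A₂ A₃ : Set V}

lemma IsSpanningTree.rotate_of_mem (hU : IsSpanningTree G (insert s(v₁, v₂) T))
    (h12 : s(v₁, v₂) ∉ T) (h23 : s(v₂, v₃) ∈ T) (h13 : G.Adj v₁ v₃) :
    IsSpanningTree G (insert s(v₁, v₃) T) := by
  have hsep := hU.not_reachable_erase (Finset.mem_insert_self _ T)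
  rw [Finset.erase_insert h12] at hsep
  exact hU.insert_of_insert h12 h13 fun h ↦ hsep (h.trans (spanGraph_reachable_of_mem h23).symm)

lemma IsSpanningTree.rotate_of_noCrossing {f : Sym2 V}
    (hU : IsSpanningTree G (insert s(v₁, v₂) (insert f t)))
    (hf : f ≠ s(v₁, v₃)) (h13 : G.Adj v₁ v₃)
    (hv₁ : v₁ ∈ A₁) (hv₃ : v₃ ∈ A₃) (hv₂₁ : v₂ ∉ A₁) (hv₂₃ : v₂ ∉ A₃) (hd : Disjoint A₁ A₃)
    (ht₁ : NoCrossing t A₁) (ht₃ : NoCrossing t A₃)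
    (honly : ∀ x ∈ A₁, ∀ y ∈ A₃, G.Adj x y → s(x, y) = s(v₁, v₃)) :
    IsSpanningTree G (insert s(v₁, v₃) (insert f t)) := by
  have hv₁₃ : v₁ ∉ A₃ := hd.notMem_of_mem_left hv₁
  have hv₃₁ : v₃ ∉ A₁ := hd.notMem_of_mem_right hv₃
  obtain ⟨x, hx, y, hy, hxy⟩ :=
    exists_crossing_of_reachable (hU.2.1.preconnected v₃ v₁) hv₃ hv₁₃
  obtain rfl : s(x, y) = f := by
    rw [Finset.insert_comm] at hxy
    refine (Finset.mem_insert.1 hxy).resolve_right ?_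
    exact (ht₃.insert (iff_of_false hv₁₃ hv₂₃)).notMem fun h ↦ hy (h.1 hx)
  have hyA₁ : y ∉ A₁ := fun hy₁ ↦ hf (Sym2.eq_swap.trans (honly y hy₁ x hx (hU.1 hxy).symm))
  have hcut : NoCrossing (insert s(x, y) t) A₁ :=
    ht₁.insert (iff_of_false (hd.notMem_of_mem_right hx) hyA₁)
  exact hU.insert_of_insert (hcut.notMem fun h ↦ hv₂₁ (h.1 hv₁)) h13 (hcut.not_reachable hv₁ hv₃₁)

lemma isExchange_rotate (hS : IsSpanningTree G (insert s(v₁, v₂) (insert s(v₂, v₃) t)))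
    (h13 : G.Adj v₁ v₃)
    (hv₁ : v₁ ∈ A₁) (hv₃ : v₃ ∈ A₃) (hv₂₁ : v₂ ∉ A₁) (hv₂₃ : v₂ ∉ A₃) (hd : Disjoint A₁ A₃)
    (ht₁ : NoCrossing t A₁) (ht₃ : NoCrossing t A₃)
    (honly : ∀ x ∈ A₁, ∀ y ∈ A₃, G.Adj x y → s(x, y) = s(v₁, v₃)) {e f : Sym2 V}
    (hef : IsExchange G (insert s(v₁, v₂) (insert s(v₂, v₃) t)) e f) :
    IsExchange G (insert s(v₁, v₃) (insert s(v₂, v₃) t))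
      (Equiv.swap s(v₁, v₂) s(v₁, v₃) e) (Equiv.swap s(v₁, v₂) s(v₁, v₃) f) := by
  have hcut : NoCrossing (insert s(v₂, v₃) t) A₁ :=
    ht₁.insert (iff_of_false hv₂₁ (hd.notMem_of_mem_right hv₃))
  have h12 : s(v₁, v₂) ∉ insert s(v₂, v₃) t := hcut.notMem fun h ↦ hv₂₁ (h.1 hv₁)
  have h13' : s(v₁, v₃) ∉ insert s(v₂, v₃) t :=
    hcut.notMem fun h ↦ hd.notMem_of_mem_right hv₃ (h.1 hv₁)
  have h23 : s(v₂, v₃) ∉ t := ht₃.notMem fun h ↦ hv₂₃ (h.2 hv₃)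
  refine isExchange_swap h12 h13' hS (fun e he f hf hfc hU ↦ ?_) hef
  rcases eq_or_ne e s(v₂, v₃) with rfl | hne
  · rw [Finset.erase_insert h23] at hU ⊢
    exact hU.rotate_of_noCrossing hfc h13 hv₁ hv₃ hv₂₁ hv₂₃ hd ht₁ ht₃ honly
  · refine hU.rotate_of_mem (fun h ↦ ?_) ?_ h13
    · rcases Finset.mem_insert.1 h with rfl | h
      exacts [hf (Finset.mem_insert_self _ _), h12 (Finset.mem_of_mem_erase h)]
    · exact Finset.mem_insert_of_mem (Finset.mem_erase.2 ⟨hne.symm, Finset.mem_insert_self _ _⟩)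

lemma exists_isExchange_swap_not_isExchange {x y : V}
    (hS' : IsSpanningTree G (insert s(v₁, v₃) (insert s(v₂, v₃) t)))
    (hv₁ : v₁ ∈ A₁) (hv₂ : v₂ ∈ A₂) (hv₃ : v₃ ∈ A₃)
    (hd12 : Disjoint A₁ A₂) (hd13 : Disjoint A₁ A₃) (hd23 : Disjoint A₂ A₃)
    (ht₂ : NoCrossing t A₂) (ht₃ : NoCrossing t A₃)
    (hx : x ∈ A₁) (hy : y ∈ A₂) (hxy : G.Adj x y) (hne : s(x, y) ≠ s(v₁, v₂)) :
    ∃ e ∈ insert s(v₁, v₂) (insert s(v₂, v₃) t), ∃ f ∈ G.edgeSet,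
      f ∉ insert s(v₁, v₂) (insert s(v₂, v₃) t) ∧
      ¬ IsExchange G (insert s(v₁, v₂) (insert s(v₂, v₃) t)) e f ∧
      IsExchange G (insert s(v₁, v₃) (insert s(v₂, v₃) t))
        (Equiv.swap s(v₁, v₂) s(v₁, v₃) e) (Equiv.swap s(v₁, v₂) s(v₁, v₃) f) := by
  have hv₁₃ : v₁ ∉ A₃ := hd13.notMem_of_mem_left hv₁
  have hcut₂ : NoCrossing (insert s(v₁, v₃) t) A₂ :=
    ht₂.insert (iff_of_false (hd12.notMem_of_mem_left hv₁) (hd23.notMem_of_mem_right hv₃))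
  have hcut₃ : NoCrossing (insert s(v₁, v₂) t) A₃ :=
    ht₃.insert (iff_of_false hv₁₃ (hd23.notMem_of_mem_left hv₂))
  have ne_h23 {u v : V} (hu : u ∈ A₁) : s(u, v) ≠ s(v₂, v₃) := by
    refine ne_of_mem_of_not_mem' (Sym2.mem_mk_left u v) ?_
    rw [Sym2.mem_iff, not_or]
    exact ⟨hd12.ne_of_mem hu hv₂, hd13.ne_of_mem hu hv₃⟩
  have hxyS' : s(x, y) ∉ insert s(v₁, v₃) t :=
    hcut₂.notMem fun h ↦ hd12.notMem_of_mem_left hx (h.2 hy)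
  rw [Finset.mem_insert, not_or] at hxyS'
  refine ⟨s(v₂, v₃), by simp, s(x, y), hxy, by simp [hne, ne_h23 hx, hxyS'.2], ?_, ?_⟩
  · rw [Finset.insert_comm]
    exact not_isExchange_of_noCrossing hcut₃ (iff_of_false (hd13.notMem_of_mem_left hx)
      (hd23.notMem_of_mem_left hy)) hv₃ hv₁₃
  · rw [Equiv.swap_apply_of_ne_of_ne (ne_h23 hv₁).symm (ne_h23 hv₁).symm,
      Equiv.swap_apply_of_ne_of_ne hne hxyS'.1, Finset.insert_comm]
    rw [Finset.insert_comm] at hS'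
    exact hS'.isExchange_of_noCrossing hcut₂ (hd12.notMem_of_mem_left hx) hy hxy (ne_h23 hx)

end Rotation

/-- Triangle-edge rotation: `G` contains a triangle `v1 v2 v3`, and `t1, t2, t3` are the
edge sets of pairwise vertex-disjoint subtrees, with respective vertex sets `A1, A2, A3`
partitioning `V`, containing `v1, v2, v3` respectively, such that
`S = t1 ∪ t2 ∪ t3 ∪ {e12, e23}` and `S' = t1 ∪ t2 ∪ t3 ∪ {e13, e23}` are spanning trees.
If `G` has at least one edge other than `e12` between `A1` and `A2`, and no edge other
than `e13` between `A1` and `A3`, then `P_MST(S; G) > P_MST(S'; G)`. -/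
theorem triangle_edge_rotation [Fintype V] (G : SimpleGraph V) (hG : G.Connected)
    (v1 v2 v3 : V) (h12 : G.Adj v1 v2) (h23 : G.Adj v2 v3) (h13 : G.Adj v1 v3)
    (A1 A2 A3 : Set V) (hv1 : v1 ∈ A1) (hv2 : v2 ∈ A2) (hv3 : v3 ∈ A3)
    (hd12 : Disjoint A1 A2) (hd13 : Disjoint A1 A3) (hd23 : Disjoint A2 A3)
    (hcov : A1 ∪ A2 ∪ A3 = Set.univ)
    (t1 t2 t3 : Finset (Sym2 V))
    (ht1e : ∀ e ∈ t1, ∀ x : V, x ∈ e → x ∈ A1)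
    (ht2e : ∀ e ∈ t2, ∀ x : V, x ∈ e → x ∈ A2)
    (ht3e : ∀ e ∈ t3, ∀ x : V, x ∈ e → x ∈ A3)
    (ht1c : ∀ x ∈ A1, ∀ y ∈ A1, (spanGraph t1).Reachable x y)
    (ht2c : ∀ x ∈ A2, ∀ y ∈ A2, (spanGraph t2).Reachable x y)
    (ht3c : ∀ x ∈ A3, ∀ y ∈ A3, (spanGraph t3).Reachable x y)
    (hS : IsSpanningTree G (t1 ∪ t2 ∪ t3 ∪ {s(v1, v2), s(v2, v3)}))
    (hS' : IsSpanningTree G (t1 ∪ t2 ∪ t3 ∪ {s(v1, v3), s(v2, v3)}))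
    (hextra : ∃ e ∈ G.edgeSet, e ≠ s(v1, v2) ∧ ∃ x ∈ A1, ∃ y ∈ A2, e = s(x, y))
    (honly : ∀ e ∈ G.edgeSet, (∃ x ∈ A1, ∃ y ∈ A3, e = s(x, y)) → e = s(v1, v3)) :
    mstProb G (t1 ∪ t2 ∪ t3 ∪ {s(v1, v2), s(v2, v3)}) >
      mstProb G (t1 ∪ t2 ∪ t3 ∪ {s(v1, v3), s(v2, v3)}) := by
  have ht₁ : NoCrossing (t1 ∪ t2 ∪ t3) A1 :=
    ((NoCrossing.of_forall_mem ht1e).union (.of_disjoint ht2e hd12)).union (.of_disjoint ht3e hd13)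
  have ht₂ : NoCrossing (t1 ∪ t2 ∪ t3) A2 :=
    ((NoCrossing.of_disjoint ht1e hd12.symm).union (.of_forall_mem ht2e)).union
      (.of_disjoint ht3e hd23)
  have ht₃ : NoCrossing (t1 ∪ t2 ∪ t3) A3 :=
    ((NoCrossing.of_disjoint ht1e hd13.symm).union (.of_disjoint ht2e hd23.symm)).union
      (.of_forall_mem ht3e)
  simp only [Finset.union_insert, Finset.union_singleton] at hS hS' ⊢
  obtain ⟨_, hxy, hne, x, hx, y, hy, rfl⟩ := hextra
  obtain ⟨e, he, f, hfG, hf, hef, hef'⟩ := exists_isExchange_swap_not_isExchange hS' hv1 hv2 hv3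
    hd12 hd13 hd23 ht₂ ht₃ hx hy hxy hne
  refine mstProb_lt_of_isExchange_swap h12 h13 hS (fun e f ↦ ?_) he hfG hf hef hef'
  exact isExchange_rotate hS h13 hv1 hv3 (hd12.notMem_of_mem_right hv2)
    (hd23.notMem_of_mem_left hv2) hd13 ht₁ ht₃ fun x hx y hy hxy ↦ honly _ hxy ⟨x, hx, y, hy, rfl⟩

end RST
end
end
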